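/- arXiv:1610.05435 — 2 statements merged into one kernel-verified Lean document; each statement's English description precedes it below -/
import Mathlib

section
/- In the degradation construction, the Markov property also holds conditionally on the high-priority label: under the conditional probability measure given B_H = b_H (for any b_H ∈ {0,1}^{m_H} of positive probability), each low-priority bit B_L^j and the degraded output Y are conditionally independent given the stronger output Ŷ; i.e. for every b_H, the chain B_L^j → Ŷ → Y holds under P(· | B_H = b_H). -/
open MeasureTheory ProbabilityTheory
open scoped ENNReal NNReal

/-- The centered complex Gaussian law of variance `v`: real and imaginary parts are independent
centered real Gaussians of variance `v/2`. -/
noncomputable def complexGaussian (v : ℝ≥0) : Measure ℂ :=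
  ((gaussianReal 0 (v / 2)).prod (gaussianReal 0 (v / 2))).map
    (fun p => (p.1 : ℂ) + (p.2 : ℂ) * Complex.I)

/-- Kullback-Leibler divergence in base 2 (in bits). -/
noncomputable def klDiv2 {α : Type*} [MeasurableSpace α] (μ ν : Measure α) : ℝ :=
  ∫ x, Real.logb 2 ((μ.rnDeriv ν x).toReal) ∂μ

/-- Mutual information (base 2) of two random variables: KL divergence of the joint law from
the product of the marginal laws. -/
noncomputable def mutualInfo {Ω α β : Type*} [MeasurableSpace Ω] [MeasurableSpace α]
    [MeasurableSpace β] (P : Measure Ω) (X : Ω → α) (Y : Ω → β) : ℝ :=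
  klDiv2 (P.map fun ω => (X ω, Y ω)) ((P.map X).prod (P.map Y))

/-- Conditional mutual information given a finite-valued random variable `B`:
`I(X;Y|B) = ∑ b, P(B = b) · I(X;Y)` computed under the conditional measure `P[|B = b]`. -/
noncomputable def condMutualInfo {Ω α β γ : Type*} [MeasurableSpace Ω] [MeasurableSpace α]
    [MeasurableSpace β] [MeasurableSpace γ] [Fintype γ] (P : Measure Ω) (X : Ω → α) (Y : Ω → β)
    (B : Ω → γ) : ℝ :=
  ∑ b : γ, (P (B ⁻¹' {b})).toReal * mutualInfo (P[|B ⁻¹' {b}]) X Y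

/-!
The degraded output is a function of `Ŷ` and of the fresh noise `Ñ`, and `Ñ` is independent of
everything that produces `Ŷ`. Conditioning on an event determined by the labels preserves this
independence. If `Ñ` is independent of the pair `(Ŷ, X)`, then by the tower property
`P(X ∈ s, Ñ ∈ t | Ŷ) = P(Ñ ∈ t) P(X ∈ s | Ŷ)`, and pulling out `Ŷ`-measurable sets turns this into
the conditional independence of `X` and `(Ŷ, Ñ)` given `Ŷ`.
-/

section SigmaAlgebra

variable {Ω : Type*} {m m₁ m₂ mΩ : MeasurableSpace Ω}

lemma isPiSystem_image2_inter_measurableSet :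
    IsPiSystem (Set.image2 (· ∩ ·) {s | MeasurableSet[m₁] s} {t | MeasurableSet[m₂] t}) := by
  rintro _ ⟨s, hs, t, ht, rfl⟩ _ ⟨s', hs', t', ht', rfl⟩ -
  exact ⟨s ∩ s', hs.inter hs', t ∩ t', ht.inter ht', Set.inter_inter_inter_comm s s' t t'⟩

lemma generateFrom_image2_inter_measurableSet :
    MeasurableSpace.generateFrom
      (Set.image2 (· ∩ ·) {s | MeasurableSet[m₁] s} {t | MeasurableSet[m₂] t}) = m₁ ⊔ m₂ := by
  apply le_antisymm
  · refine MeasurableSpace.generateFrom_le ?_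
    rintro _ ⟨s, hs, t, ht, rfl⟩
    have hs' : MeasurableSet[m₁ ⊔ m₂] s := le_sup_left (a := m₁) (b := m₂) s hs
    have ht' : MeasurableSet[m₁ ⊔ m₂] t := le_sup_right (a := m₁) (b := m₂) t ht
    exact hs'.inter ht'
  · refine sup_le (fun s hs ↦ ?_) (fun t ht ↦ ?_)
    · exact MeasurableSpace.measurableSet_generateFrom
        ⟨s, hs, Set.univ, MeasurableSet.univ, Set.inter_univ s⟩
    · exact MeasurableSpace.measurableSet_generateFrom
        ⟨Set.univ, MeasurableSet.univ, t, ht, Set.univ_inter t⟩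

variable {μ : Measure Ω} [IsFiniteMeasure μ] {s t : Set Ω}

lemma indep_cond_of_measurableSet_left (hm₁ : m₁ ≤ mΩ) (hind : Indep m₁ m₂ μ)
    (hs : MeasurableSet[m₁] s) (hμs : μ s ≠ 0) : Indep m₁ m₂ μ[|s] := by
  rw [Indep_iff] at hind ⊢
  intro t₁ t₂ ht₁ ht₂
  simp only [cond_apply (hm₁ s hs)]
  calc (μ s)⁻¹ * μ (s ∩ (t₁ ∩ t₂))
    _ = (μ s)⁻¹ * μ (s ∩ t₁) * μ t₂ := by
      rw [← Set.inter_assoc, hind _ _ (hs.inter ht₁) ht₂, mul_assoc]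
    _ = (μ s)⁻¹ * μ (s ∩ t₁) * ((μ s)⁻¹ * μ (s ∩ t₂)) := by
      rw [hind _ _ hs ht₂, ENNReal.inv_mul_cancel_left hμs (measure_ne_top μ s)]

lemma condExp_inter_of_measurableSet_left (hs : MeasurableSet[m] s) (ht : MeasurableSet t) :
    μ⟦s ∩ t | m⟧ =ᵐ[μ] s.indicator (μ⟦t | m⟧) := by
  rw [← Set.indicator_indicator]
  exact condExp_indicator ((integrable_const 1).indicator ht) hs

lemma condExp_inter_of_indep (hm₁ : m₁ ≤ mΩ) (hm₂ : m₂ ≤ mΩ) (hind : Indep m₁ m₂ μ)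
    (hm : m ≤ m₁) (hs : MeasurableSet[m₁] s) (ht : MeasurableSet[m₂] t) :
    μ⟦s ∩ t | m⟧ =ᵐ[μ] μ.real t • μ⟦s | m⟧ := by
  have condExp_t : μ⟦t | m₁⟧ =ᵐ[μ] fun _ ↦ μ.real t := by
    have h := condExp_indep_eq hm₂ hm₁
      ((stronglyMeasurable_const (b := (1 : ℝ))).indicator ht) hind.symm
    rwa [integral_indicator_const _ (hm₂ t ht), smul_eq_mul, mul_one] at h
  have condExp_inter : μ⟦s ∩ t | m₁⟧ =ᵐ[μ] μ.real t • s.indicator fun _ ↦ (1 : ℝ) := by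
    filter_upwards [condExp_inter_of_measurableSet_left hs (hm₂ t ht), condExp_t] with ω hst ht
    by_cases hω : ω ∈ s <;> simp [hst, ht, hω]
  calc μ⟦s ∩ t | m⟧
    _ =ᵐ[μ] μ[μ⟦s ∩ t | m₁⟧ | m] := (condExp_condExp_of_le hm hm₁).symm
    _ =ᵐ[μ] μ[μ.real t • s.indicator fun _ ↦ (1 : ℝ) | m] := condExp_congr_ae condExp_inter
    _ =ᵐ[μ] μ.real t • μ⟦s | m⟧ := condExp_smul _ _ m

lemma condIndep_sup_of_indep_sup [StandardBorelSpace Ω] (hm : m ≤ mΩ) (hm₁ : m₁ ≤ mΩ)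
    (hm₂ : m₂ ≤ mΩ) (hind : Indep (m ⊔ m₁) m₂ μ) : CondIndep m m₁ (m ⊔ m₂) hm μ := by
  refine CondIndepSets.condIndep hm₁ (sup_le hm hm₂)
    (@MeasurableSpace.isPiSystem_measurableSet Ω m₁) isPiSystem_image2_inter_measurableSet
    (@MeasurableSpace.generateFrom_measurableSet Ω m₁).symm
    generateFrom_image2_inter_measurableSet.symm ?_
  refine (condIndepSets_iff _ _ _ _ (fun s hs ↦ hm₁ s hs) ?_ μ).2 ?_
  · rintro _ ⟨a, ha, t, ht, rfl⟩
    exact (hm a ha).inter (hm₂ t ht)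
  rintro s _ hs ⟨a, ha, t, ht, rfl⟩
  have ha' : MeasurableSet[m ⊔ m₁] a := le_sup_left (a := m) (b := m₁) a ha
  have hs' : MeasurableSet[m ⊔ m₁] s := le_sup_right (a := m) (b := m₁) s hs
  have pull_t {u : Set Ω} (hu : MeasurableSet[m ⊔ m₁] u) :
      μ⟦u ∩ t | m⟧ =ᵐ[μ] μ.real t • μ⟦u | m⟧ :=
    condExp_inter_of_indep (sup_le hm hm₁) hm₂ hind le_sup_left hu ht
  have pull_a : μ⟦a ∩ s | m⟧ =ᵐ[μ] a.indicator (μ⟦s | m⟧) :=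
    condExp_inter_of_measurableSet_left ha (hm₁ s hs)
  have condExp_a : μ⟦a | m⟧ = a.indicator fun _ ↦ (1 : ℝ) :=
    condExp_of_stronglyMeasurable hm (stronglyMeasurable_const.indicator ha)
      ((integrable_const 1).indicator (hm a ha))
  rw [← Set.inter_assoc, Set.inter_comm s a]
  filter_upwards [pull_t (ha'.inter hs'), pull_t ha', pull_a] with ω hast hat has
  by_cases hω : ω ∈ a <;> simp [hast, hat, has, condExp_a, hω, mul_comm]

end SigmaAlgebra

section RandomVariables

variable {Ω α β γ : Type*} [MeasurableSpace Ω] [MeasurableSpace α] [MeasurableSpace β]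
  [MeasurableSpace γ] {μ : Measure Ω} [IsFiniteMeasure μ]

lemma condIndepFun_prodMk_of_indepFun_prodMk [StandardBorelSpace Ω] {X : Ω → α} {Z : Ω → β}
    {N : Ω → γ} (hX : Measurable X) (hZ : Measurable Z) (hN : Measurable N)
    (hind : IndepFun (fun ω ↦ (Z ω, X ω)) N μ) : X ⟂ᵢ[Z, hZ; μ] fun ω ↦ (Z ω, N ω) := by
  rw [IndepFun_iff_Indep, Prod.instMeasurableSpace, MeasurableSpace.comap_prodMk] at hind
  rw [condIndepFun_iff_condIndep, Prod.instMeasurableSpace, MeasurableSpace.comap_prodMk]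
  exact condIndep_sup_of_indep_sup hZ.comap_le hX.comap_le hN.comap_le hind

end RandomVariables

theorem hm_degradation_markov_cond_general
    {Ω α β γ δ η ξ : Type*} [MeasurableSpace Ω] [StandardBorelSpace Ω]
    [MeasurableSpace α] [MeasurableSpace β] [MeasurableSpace γ] [MeasurableSpace δ]
    [MeasurableSpace η] [MeasurableSpace ξ] (P : Measure Ω) [IsFiniteMeasure P]
    {BH : Ω → α} {BL : Ω → β} {Nhat : Ω → γ} {Ntilde : Ω → δ} {Yhat : Ω → η}
    (hBH : Measurable BH) (hBL : Measurable BL) (hNhat : Measurable Nhat)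
    (hNtilde : Measurable Ntilde) (hYhatMeas : Measurable Yhat)
    (hIndep : IndepFun (fun ω ↦ ((BH ω, BL ω), Nhat ω)) Ntilde P)
    {f : (α × β) × γ → η} (hf : Measurable f) (hYhat : Yhat = fun ω ↦ f ((BH ω, BL ω), Nhat ω))
    {g : η × δ → ξ} (hg : Measurable g) {S : Set α} (hS : MeasurableSet S)
    (hPS : P (BH ⁻¹' S) ≠ 0) :
    BL ⟂ᵢ[Yhat, hYhatMeas; P[|BH ⁻¹' S]] fun ω ↦ g (Yhat ω, Ntilde ω) := by
  have hInputs : IndepFun (fun ω ↦ ((BH ω, BL ω), Nhat ω)) Ntilde P[|BH ⁻¹' S] :=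
    indep_cond_of_measurableSet_left (Measurable.comap_le (by fun_prop)) hIndep
      ⟨_, measurable_fst.fst hS, rfl⟩ hPS
  have hOutput : IndepFun (fun ω ↦ (Yhat ω, BL ω)) Ntilde P[|BH ⁻¹' S] := by
    subst hYhat
    exact hInputs.comp (hf.prodMk measurable_fst.snd) measurable_id
  have hMarkov := condIndepFun_prodMk_of_indepFun_prodMk hBL hYhatMeas hNtilde hOutput
  exact hMarkov.comp measurable_id hg

/-!
STATEMENT 2: In the degradation construction, the Markov property also holds conditionally on the
high-priority label: under the conditional probability measure given `B_H = b_H` (for any `b_H`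
of positive probability), each low-priority bit `B_L^j` and the degraded output `Y` are
conditionally independent given the stronger output `Ŷ`, i.e. `B_L^j → Ŷ → Y` under
`P(· | B_H = b_H)`.
-/
theorem hm_degradation_markov_cond
    {Ω : Type*} [MeasurableSpace Ω] [StandardBorelSpace Ω] [Nonempty Ω]
    (P : Measure Ω) [IsProbabilityMeasure P]
    (mH mL : ℕ) (hmH : 0 < mH) (hmL : 0 < mL)
    (μc : (Fin mH → Bool) × (Fin mL → Bool) → ℂ)
    (BH : Ω → Fin mH → Bool) (BL : Ω → Fin mL → Bool)
    (hBH : Measurable BH) (hBL : Measurable BL)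
    (hUnif : P.map (fun ω => (BH ω, BL ω)) =
      (PMF.uniformOfFintype ((Fin mH → Bool) × (Fin mL → Bool))).toMeasure)
    (ρ : ℝ) (hρ : 1 ≤ ρ) (σ2 : ℝ≥0) (hσ2 : 0 < σ2)
    (Nhat Ntilde : Ω → ℂ) (hNhatMeas : Measurable Nhat) (hNtildeMeas : Measurable Ntilde)
    (lawNhat : P.map Nhat = complexGaussian σ2)
    (lawNtilde : P.map Ntilde = complexGaussian (σ2 * (1 - 1 / ρ ^ 2).toNNReal))
    (hIndepNhat : IndepFun (fun ω => (BH ω, BL ω)) Nhat P)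
    (hIndepNtilde : IndepFun (fun ω => ((BH ω, BL ω), Nhat ω)) Ntilde P)
    (Z Yhat Y : Ω → ℂ)
    (hZ : Z = fun ω => μc (BH ω, BL ω))
    (hYhat : Yhat = fun ω => (ρ : ℂ) * Z ω + Nhat ω)
    (hY : Y = fun ω => ((ρ : ℂ))⁻¹ * Yhat ω + Ntilde ω)
    (hYhatMeas : Measurable Yhat)
    (bH : Fin mH → Bool) (hbH : P (BH ⁻¹' {bH}) ≠ 0) :
    ∀ j : Fin mL,
      CondIndepFun (MeasurableSpace.comap Yhat inferInstance) hYhatMeas.comap_le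
        (fun ω => BL ω j) Y (P[|BH ⁻¹' {bH}]) := by
  intro j
  have hμc : Measurable μc := measurable_of_finite μc
  subst hY hZ
  exact (hm_degradation_markov_cond_general P hBH hBL hNhatMeas hNtildeMeas hYhatMeas
    hIndepNtilde (f := fun p ↦ (ρ : ℂ) * μc p.1 + p.2) (by fun_prop) hYhat
    (g := fun p ↦ (ρ : ℂ)⁻¹ * p.1 + p.2) (by fun_prop) (measurableSet_singleton bH) hbH).comp
    (measurable_pi_apply j) measurable_id
end

section
/- Amplifying a hierarchical constellation does not decrease any per-bit high-priority mutual information: for every ρ ≥ 1, every noise variance σ² > 0, and every index 1 ≤ i ≤ m_H, one has I(B_H^i ; ρZ + N) ≥ I(B_H^i ; Z + N), where N is a complex Gaussian noise of variance σ² independent of the labels. -/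
open MeasureTheory ProbabilityTheory
open scoped ENNReal NNReal

/-!
The high-priority bit `X` reaches the receiver only through `Z`, over an additive Gaussian channel,
and the channel `z ↦ z + N` is a degraded version of `z ↦ ρ z + N`: scaling the output of the latter
by `ρ⁻¹` leaves Gaussian noise of variance `‖ρ‖⁻² σ² ≤ σ²`, and adding independent Gaussian noise
of the missing variance restores the former. The data processing inequality concludes. It compares
`ℝ≥0∞`-valued divergences; since `X` takes finitely many values the joint law is dominated by a
multiple of the product of its marginals, so these divergences are finite and agree, up to the
factor `log 2`, with the real-valued integrals that define `mutualInfo`.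
-/

open InformationTheory

section KullbackLeibler

variable {α : Type*} [MeasurableSpace α] {μ ν : Measure α} {c : ℝ≥0∞}

lemma rnDeriv_le_of_le_smul [SigmaFinite ν] (h : μ ≤ c • ν) : μ.rnDeriv ν ≤ᵐ[ν] fun _ ↦ c := by
  refine ae_le_of_forall_setLIntegral_le_of_sigmaFinite (μ.measurable_rnDeriv ν) fun s _ _ ↦ ?_
  rw [setLIntegral_const]
  exact (Measure.setLIntegral_rnDeriv_le s).trans (h s)

variable [IsFiniteMeasure μ] [IsFiniteMeasure ν]

lemma klDiv_ne_top_of_le_smul (hc : c ≠ ∞) (h : μ ≤ c • ν) : klDiv μ ν ≠ ∞ := by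
  have hac : μ ≪ ν := Measure.absolutelyContinuous_of_le_smul h
  obtain ⟨K, hK⟩ := (isCompact_Icc (a := (0 : ℝ)) (b := c.toReal)).exists_bound_of_continuousOn
    continuous_klFun.continuousOn
  refine klDiv_ne_top hac ((integrable_klFun_rnDeriv_iff hac).1 ?_)
  refine Integrable.of_bound (Measurable.aestronglyMeasurable (by fun_prop)) K ?_
  filter_upwards [rnDeriv_le_of_le_smul h] with x hx
  exact hK _ ⟨ENNReal.toReal_nonneg, ENNReal.toReal_mono hc hx⟩

lemma klDiv2_eq_toReal_klDiv_div_log_two (hac : μ ≪ ν)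
    (h_univ : μ Set.univ = ν Set.univ) : klDiv2 μ ν = (klDiv μ ν).toReal / Real.log 2 := by
  rw [toReal_klDiv_of_measure_eq hac h_univ, ← integral_div]
  rfl

end KullbackLeibler

section JointLaw

variable {Ω α β γ : Type*} [MeasurableSpace Ω] [MeasurableSpace α] [MeasurableSpace β]
  [MeasurableSpace γ]

/-- Mutual information of two variables with joint law `π`, in nats and with values in `ℝ≥0∞`.
Unlike `mutualInfo`, it is infinite rather than `0` when the divergence integral diverges, so that
the data processing inequality holds without any integrability condition. -/
noncomputable def jointMutualInfo (π : Measure (α × β)) : ℝ≥0∞ :=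
  klDiv π (π.fst.prod π.snd)

lemma lintegral_id_parallelComp_comp (π : Measure (α × β)) (κ : Kernel β γ) [IsSFiniteKernel κ]
    {f : α × γ → ℝ≥0∞} (hf : Measurable f) :
    ∫⁻ p, f p ∂(((Kernel.id : Kernel α α) ∥ₖ κ) ∘ₘ π) = ∫⁻ p, ∫⁻ y, f (p.1, y) ∂κ p.2 ∂π := by
  rw [Measure.lintegral_bind (by fun_prop) hf.aemeasurable]
  refine lintegral_congr fun p ↦ ?_
  rw [Kernel.lintegral_parallelComp _ hf, Kernel.id_apply,
    lintegral_dirac' _ hf.lintegral_prod_right']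

lemma snd_id_parallelComp_comp (π : Measure (α × β)) (κ : Kernel β γ) [IsSFiniteKernel κ] :
    ((Kernel.id ∥ₖ κ) ∘ₘ π).snd = κ ∘ₘ π.snd := by
  refine Measure.ext_of_lintegral _ fun f hf ↦ ?_
  rw [Measure.snd, lintegral_map hf measurable_snd,
    lintegral_id_parallelComp_comp π κ (by fun_prop),
    Measure.lintegral_bind κ.aemeasurable hf.aemeasurable, Measure.snd,
    lintegral_map hf.lintegral_kernel measurable_snd]

lemma fst_id_parallelComp_comp (π : Measure (α × β)) (κ : Kernel β γ) [IsMarkovKernel κ] :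
    ((Kernel.id ∥ₖ κ) ∘ₘ π).fst = π.fst := by
  refine Measure.ext_of_lintegral _ fun f hf ↦ ?_
  rw [Measure.fst, lintegral_map hf measurable_fst,
    lintegral_id_parallelComp_comp π κ (by fun_prop), Measure.fst, lintegral_map hf measurable_fst]
  simp

lemma jointMutualInfo_id_parallelComp_comp_le (π : Measure (α × β)) [IsFiniteMeasure π]
    (κ : Kernel β γ) [IsMarkovKernel κ] :
    jointMutualInfo ((Kernel.id ∥ₖ κ) ∘ₘ π) ≤ jointMutualInfo π := by
  rw [jointMutualInfo, fst_id_parallelComp_comp, snd_id_parallelComp_comp, Measure.prod_comp_right]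
  exact klDiv_comp_right_le _ _ _

section Finite

variable [MeasurableSingletonClass α]

lemma measure_singleton_prod_le (π : Measure (α × β)) [IsFiniteMeasure π] (x : α) {t : Set β}
    (ht : MeasurableSet t) :
    π ({x} ×ˢ t) ≤ (π.fst {x}).toNNReal⁻¹ * (π.snd t * π.fst {x}) := by
  rcases eq_or_ne (π.fst {x}) 0 with hx | hx
  · rw [Measure.fst_apply (measurableSet_singleton x)] at hx
    exact (measure_mono_null (fun p hp ↦ hp.1) hx).trans_le zero_le
  calc π ({x} ×ˢ t) ≤ π.snd t := by
        rw [Measure.snd_apply ht]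
        exact measure_mono fun p hp ↦ hp.2
    _ = (π.fst {x}).toNNReal⁻¹ * (π.snd t * π.fst {x}) := by
        rw [ENNReal.coe_inv (ENNReal.toNNReal_ne_zero.2 ⟨hx, measure_ne_top _ _⟩),
          ENNReal.coe_toNNReal (measure_ne_top _ _), mul_left_comm,
          ENNReal.inv_mul_cancel hx (measure_ne_top _ _), mul_one]

variable [Finite α]

lemma exists_le_smul_fst_prod_snd (π : Measure (α × β)) [IsFiniteMeasure π] :
    ∃ c ≠ ∞, π ≤ c • π.fst.prod π.snd := by
  have := Fintype.ofFinite α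
  let w (x : α) : ℝ≥0 := (π.fst {x}).toNNReal⁻¹
  have w_le (x : α) : w x ≤ ∑ x', w x' :=
    Finset.single_le_sum (fun _ _ ↦ zero_le) (Finset.mem_univ x)
  refine ⟨(∑ x, w x : ℝ≥0), ENNReal.coe_ne_top, Measure.le_iff.2 fun s hs ↦ ?_⟩
  have hs_cover : s ⊆ ⋃ x, {x} ×ˢ (Prod.mk x ⁻¹' s) := fun p hp ↦
    Set.mem_iUnion.2 ⟨p.1, rfl, hp⟩
  calc π s ≤ ∑ x, π ({x} ×ˢ (Prod.mk x ⁻¹' s)) :=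
        (measure_mono hs_cover).trans (measure_iUnion_fintype_le _ _)
    _ ≤ ∑ x, w x * (π.snd (Prod.mk x ⁻¹' s) * π.fst {x}) :=
        Finset.sum_le_sum fun x _ ↦ measure_singleton_prod_le π x (measurable_prodMk_left hs)
    _ ≤ ∑ x, (∑ x', w x' : ℝ≥0) * (π.snd (Prod.mk x ⁻¹' s) * π.fst {x}) := by
        gcongr with x
        exact w_le x
    _ = ((∑ x, w x : ℝ≥0) • π.fst.prod π.snd) s := by
        rw [← Finset.mul_sum, ← lintegral_fintype, ← Measure.prod_apply hs]
        rfl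

lemma jointMutualInfo_ne_top (π : Measure (α × β)) [IsFiniteMeasure π] :
    jointMutualInfo π ≠ ∞ :=
  let ⟨_, hc, hle⟩ := exists_le_smul_fst_prod_snd π
  klDiv_ne_top_of_le_smul hc hle

lemma mutualInfo_eq_toReal_jointMutualInfo {P : Measure Ω} [IsProbabilityMeasure P] {X : Ω → α}
    {Y : Ω → β} (hX : AEMeasurable X P) (hY : AEMeasurable Y P) :
    mutualInfo P X Y = (jointMutualInfo (P.map fun ω ↦ (X ω, Y ω))).toReal / Real.log 2 := by
  have := Measure.isProbabilityMeasure_map (hX.prodMk hY)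
  obtain ⟨c, -, hle⟩ := exists_le_smul_fst_prod_snd (P.map fun ω ↦ (X ω, Y ω))
  rw [mutualInfo, ← Measure.fst_map_prodMk₀ (X := X) hY, ← Measure.snd_map_prodMk₀ (Y := Y) hX]
  exact klDiv2_eq_toReal_klDiv_div_log_two (Measure.absolutelyContinuous_of_le_smul hle) (by simp)

end Finite

end JointLaw

section ComplexGaussian

open scoped ComplexConjugate

instance isProbabilityMeasure_complexGaussian (v : ℝ≥0) :
    IsProbabilityMeasure (complexGaussian v) :=
  Measure.isProbabilityMeasure_map (by fun_prop)

lemma charFun_complexGaussian (v : ℝ≥0) (t : ℂ) :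
    charFun (complexGaussian v) t = Complex.exp (-(v * ‖t‖ ^ 2 / 4 : ℝ)) := by
  have charFun_coord (s : ℝ) := charFun_gaussianReal (μ := 0) (v := v / 2) s
  simp only [charFun_apply_real] at charFun_coord
  have exp_inner (p : ℝ × ℝ) : Complex.exp (inner ℝ (p.1 + p.2 * Complex.I : ℂ) t * Complex.I)
      = Complex.exp (t.re * p.1 * Complex.I) * Complex.exp (t.im * p.2 * Complex.I) := by
    rw [← Complex.exp_add]
    congr 1
    simp [Complex.inner]
    ring
  rw [charFun_apply, complexGaussian, integral_map (by fun_prop) (by fun_prop)]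
  simp_rw [exp_inner]
  rw [integral_prod_mul (fun x : ℝ ↦ Complex.exp (t.re * x * Complex.I))
    (fun y : ℝ ↦ Complex.exp (t.im * y * Complex.I)), charFun_coord, charFun_coord,
    ← Complex.exp_add, Complex.sq_norm, Complex.normSq_apply]
  congr 1
  push_cast
  ring

lemma charFun_map_const_mul (μ : Measure ℂ) (c t : ℂ) :
    charFun (μ.map (c * ·)) t = charFun μ (conj c * t) := by
  rw [charFun_apply, charFun_apply, integral_map (by fun_prop) (by fun_prop)]
  simp [Complex.inner, mul_assoc, mul_left_comm]

lemma complexGaussian_map_const_mul (v : ℝ≥0) (c : ℂ) :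
    (complexGaussian v).map (c * ·) = complexGaussian (‖c‖₊ ^ 2 * v) := by
  have := Measure.isProbabilityMeasure_map (μ := complexGaussian v) (f := (c * ·)) (by fun_prop)
  refine Measure.ext_of_charFun (funext fun t ↦ ?_)
  rw [charFun_map_const_mul, charFun_complexGaussian, charFun_complexGaussian]
  congr 3
  simp
  ring

lemma complexGaussian_conv_complexGaussian (v w : ℝ≥0) :
    complexGaussian v ∗ complexGaussian w = complexGaussian (v + w) := by
  refine Measure.ext_of_charFun (funext fun t ↦ ?_)
  rw [charFun_conv, charFun_complexGaussian, charFun_complexGaussian, charFun_complexGaussian,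
    ← Complex.exp_add]
  congr 1
  push_cast
  ring

end ComplexGaussian

section GaussianChannel

/-- The additive white Gaussian noise channel with complex gain `c` and noise variance `v`: the
Markov kernel sending an input `z` to the law of `c * z + N`, for `N` a centered complex Gaussian of
variance `v`. -/
noncomputable def awgn (c : ℂ) (v : ℝ≥0) : Kernel ℂ ℂ :=
  (Kernel.deterministic (c * ·) (by fun_prop) ×ₖ Kernel.const ℂ (complexGaussian v)).map
    fun p ↦ p.1 + p.2

instance isMarkovKernel_awgn (c : ℂ) (v : ℝ≥0) : IsMarkovKernel (awgn c v) :=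
  Kernel.IsMarkovKernel.map _ (by fun_prop)

lemma awgn_apply (c : ℂ) (v : ℝ≥0) (z : ℂ) :
    awgn c v z = .dirac (c * z) ∗ complexGaussian v := by
  rw [awgn, Kernel.map_apply _ (by fun_prop), Kernel.prod_apply, Kernel.deterministic_apply,
    Kernel.const_apply, Measure.conv]

lemma lintegral_awgn (c : ℂ) (v : ℝ≥0) (z : ℂ) {f : ℂ → ℝ≥0∞} (hf : Measurable f) :
    ∫⁻ y, f y ∂awgn c v z = ∫⁻ n, f (c * z + n) ∂complexGaussian v := by
  rw [awgn_apply, Measure.dirac_conv, lintegral_map hf (by fun_prop)]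

lemma awgn_comp_measure (c : ℂ) (v : ℝ≥0) (μ : Measure ℂ) :
    awgn c v ∘ₘ μ = μ.map (c * ·) ∗ complexGaussian v := by
  refine Measure.ext_of_lintegral _ fun f hf ↦ ?_
  rw [Measure.lintegral_bind (by fun_prop) (by fun_prop), Measure.lintegral_conv hf,
    lintegral_map (by fun_prop) (by fun_prop)]
  exact lintegral_congr fun z ↦ lintegral_awgn c v z hf

lemma awgn_comp_awgn (c d : ℂ) (v w : ℝ≥0) :
    awgn d w ∘ₖ awgn c v = awgn (d * c) (‖d‖₊ ^ 2 * v + w) := by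
  ext1 z
  have map_mul_conv : (Measure.dirac (c * z) ∗ complexGaussian v).map (d * ·)
      = .dirac (d * c * z) ∗ complexGaussian (‖d‖₊ ^ 2 * v) := by
    rw [← complexGaussian_map_const_mul, mul_assoc, ← Measure.map_dirac' (measurable_const_mul d)]
    exact Measure.map_conv_addMonoidHom (AddMonoidHom.mulLeft d) (measurable_const_mul d)
  rw [Kernel.comp_apply, awgn_comp_measure, awgn_apply, awgn_apply, map_mul_conv,
    Measure.conv_assoc, complexGaussian_conv_complexGaussian]

lemma awgn_comp_awgn_inv {ρ : ℂ} (hρ : 1 ≤ ‖ρ‖) (v : ℝ≥0) :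
    awgn ρ⁻¹ ((1 - ‖ρ⁻¹‖₊ ^ 2) * v) ∘ₖ awgn ρ v = awgn 1 v := by
  have hρ_ne : ρ ≠ 0 := norm_pos_iff.1 (one_pos.trans_le hρ)
  have hρ_inv : ‖ρ⁻¹‖₊ ^ 2 ≤ 1 := by
    rw [nnnorm_inv]
    exact pow_le_one₀ zero_le (inv_le_one_of_one_le₀ hρ)
  rw [awgn_comp_awgn, inv_mul_cancel₀ hρ_ne, ← add_mul, add_tsub_cancel_of_le hρ_inv, one_mul]

variable {Ω α : Type*} [MeasurableSpace Ω] [MeasurableSpace α] {P : Measure Ω}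
  [IsProbabilityMeasure P] {X : Ω → α} {Z N : Ω → ℂ} {v : ℝ≥0}

lemma map_prodMk_mul_add_eq_awgn_comp (hX : AEMeasurable X P) (hZ : AEMeasurable Z P)
    (hN : HasLaw N (complexGaussian v) P) (hXZN : IndepFun (fun ω ↦ (X ω, Z ω)) N P) (c : ℂ) :
    P.map (fun ω ↦ (X ω, c * Z ω + N ω))
      = (Kernel.id ∥ₖ awgn c v) ∘ₘ P.map fun ω ↦ (X ω, Z ω) := by
  have joint := (indepFun_iff_map_prod_eq_prod_map_map (hX.prodMk hZ) hN.aemeasurable).1 hXZN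
  rw [hN.map_eq] at joint
  refine Measure.ext_of_lintegral _ fun f hf ↦ ?_
  calc ∫⁻ p, f p ∂P.map (fun ω ↦ (X ω, c * Z ω + N ω))
      = ∫⁻ q, f (q.1.1, c * q.1.2 + q.2) ∂P.map (fun ω ↦ ((X ω, Z ω), N ω)) := by
        rw [lintegral_map' (by fun_prop) (by fun_prop), lintegral_map' (by fun_prop) (by fun_prop)]
    _ = ∫⁻ p, ∫⁻ n, f (p.1, c * p.2 + n) ∂complexGaussian v ∂P.map (fun ω ↦ (X ω, Z ω)) := by
        rw [joint, lintegral_prod _ (by fun_prop)]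
    _ = ∫⁻ p, f p ∂((Kernel.id ∥ₖ awgn c v) ∘ₘ P.map fun ω ↦ (X ω, Z ω)) := by
        rw [lintegral_id_parallelComp_comp _ _ hf]
        exact lintegral_congr fun p ↦ (lintegral_awgn c v p.2 (hf.comp measurable_prodMk_left)).symm

theorem hm_amplify_HP_bit_MI_general [Finite α] [MeasurableSingletonClass α]
    (hX : AEMeasurable X P) (hZ : AEMeasurable Z P) (hN : HasLaw N (complexGaussian v) P)
    (hXZN : IndepFun (fun ω ↦ (X ω, Z ω)) N P) {ρ : ℂ} (hρ : 1 ≤ ‖ρ‖) :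
    mutualInfo P X (fun ω ↦ Z ω + N ω) ≤ mutualInfo P X (fun ω ↦ ρ * Z ω + N ω) := by
  have law (c : ℂ) := map_prodMk_mul_add_eq_awgn_comp hX hZ hN hXZN c
  have degraded : P.map (fun ω ↦ (X ω, Z ω + N ω))
      = (Kernel.id ∥ₖ awgn ρ⁻¹ ((1 - ‖ρ⁻¹‖₊ ^ 2) * v)) ∘ₘ
        P.map fun ω ↦ (X ω, ρ * Z ω + N ω) := by
    rw [law ρ, Measure.comp_assoc, Kernel.parallelComp_id_left_comp_parallelComp,
      awgn_comp_awgn_inv hρ, ← law 1]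
    simp only [one_mul]
  have := Measure.isProbabilityMeasure_map (hX.prodMk ((hZ.const_mul ρ).add hN.aemeasurable))
  rw [mutualInfo_eq_toReal_jointMutualInfo hX (by fun_prop),
    mutualInfo_eq_toReal_jointMutualInfo hX (by fun_prop), degraded]
  gcongr
  · exact jointMutualInfo_ne_top _
  · exact jointMutualInfo_id_parallelComp_comp_le _ _

end GaussianChannel

/-!
STATEMENT 3: Amplifying a hierarchical constellation does not decrease any per-bit high-priority
mutual information: for every `ρ ≥ 1`, every noise variance `σ² > 0`, and every index `i`,
`I(B_H^i ; ρZ + N) ≥ I(B_H^i ; Z + N)`, where `N` is a complex Gaussian noise of variance `σ²`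
independent of the labels.
-/
theorem hm_amplify_HP_bit_MI
    {Ω : Type*} [MeasurableSpace Ω] (P : Measure Ω) [IsProbabilityMeasure P]
    (mH mL : ℕ) (hmH : 0 < mH) (hmL : 0 < mL)
    (μc : (Fin mH → Bool) × (Fin mL → Bool) → ℂ)
    (BH : Ω → Fin mH → Bool) (BL : Ω → Fin mL → Bool)
    (hBH : Measurable BH) (hBL : Measurable BL)
    (hUnif : P.map (fun ω => (BH ω, BL ω)) =
      (PMF.uniformOfFintype ((Fin mH → Bool) × (Fin mL → Bool))).toMeasure)
    (σ2 : ℝ≥0) (hσ2 : 0 < σ2)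
    (N : Ω → ℂ) (hNMeas : Measurable N)
    (lawN : P.map N = complexGaussian σ2)
    (hIndepN : IndepFun (fun ω => (BH ω, BL ω)) N P)
    (ρ : ℝ) (hρ : 1 ≤ ρ) (i : Fin mH) :
    mutualInfo P (fun ω => BH ω i) (fun ω => (ρ : ℂ) * μc (BH ω, BL ω) + N ω) ≥
      mutualInfo P (fun ω => BH ω i) (fun ω => μc (BH ω, BL ω) + N ω) := by
  have hB : Measurable fun ω ↦ (BH ω, BL ω) := hBH.prodMk hBL
  have hZ : Measurable fun ω ↦ μc (BH ω, BL ω) := (measurable_of_finite μc).comp hB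
  have hXZN : IndepFun (fun ω ↦ (BH ω i, μc (BH ω, BL ω))) N P :=
    hIndepN.comp (measurable_of_finite fun b ↦ (b.1 i, μc b)) measurable_id
  have hρ_norm : 1 ≤ ‖(ρ : ℂ)‖ := by
    rw [Complex.norm_real]
    exact hρ.trans (le_abs_self ρ)
  exact hm_amplify_HP_bit_MI_general (by fun_prop) hZ.aemeasurable ⟨hNMeas.aemeasurable, lawN⟩
    hXZN hρ_norm
end
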